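/- arXiv:2001.08881 — 2 statements merged into one kernel-verified Lean document; each statement's English description precedes it below -/
import Mathlib

section
/- Let x_1 = y_1 = 1, x_2 = 5, y_2 = 3, and for n ≥ 3 let x_n = 4x_{n-1} − x_{n-2} and y_n = 4y_{n-1} − y_{n-2}. Then x_{n-1}x_{n-2} − 3y_{n-1}y_{n-2} = −4 for all n ≥ 3. -/
/-!
Put `zₙ = xₙ + yₙ√3` and `ε = 2 + √3`. Since `ε` is a root of `X² - 4X + 1`, the characteristic
polynomial of the recurrence, and `z₂ = ε z₁`, we get `zₙ₊₁ = ε zₙ` for all `n`. As `ε` has norm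
`1`, every `zₙ` has the norm `-2` of `z₁ = 1 + √3`, and `xₙ₊₁xₙ - 3yₙ₊₁yₙ` is the rational part of
`zₙ₊₁ * star zₙ = ε * norm zₙ = -2ε`, namely `-4`.
-/

theorem eq_pow_mul_of_linear_recurrence {R : Type*} [CommRing R] {p q r : R} {u : ℕ → R}
    (hr : r ^ 2 = p * r - q) (hu₁ : u 1 = r * u 0)
    (hu : ∀ n, u (n + 2) = p * u (n + 1) - q * u n) (n : ℕ) :
    u n = r ^ n * u 0 := by
  induction n using Nat.twoStepInduction with
  | zero => rw [pow_zero, one_mul]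
  | one => rw [pow_one, hu₁]
  | more n ih ih_succ =>
    linear_combination hu n + p * ih_succ - q * ih - r ^ n * u 0 * hr

theorem zsqrtd_re_mul_star {d : ℤ} (z w : ℤ√d) :
    (z * star w).re = z.re * w.re - d * (z.im * w.im) := by
  rw [Zsqrtd.re_mul, Zsqrtd.re_star, Zsqrtd.im_star]
  ring

theorem zsqrtd_norm_pow {d : ℤ} (z : ℤ√d) (n : ℕ) : (z ^ n).norm = z.norm ^ n :=
  map_pow Zsqrtd.normMonoidHom z n

theorem zsqrtd_re_pow_succ_mul_star {d : ℤ} (ε z : ℤ√d) (n : ℕ) :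
    (ε ^ (n + 1) * z * star (ε ^ n * z)).re = ε.re * (ε.norm ^ n * z.norm) := by
  have factor_norm :
      ε ^ (n + 1) * z * star (ε ^ n * z) = ((ε ^ n * z).norm : ℤ√d) * ε := by
    rw [Zsqrtd.norm_eq_mul_conj]
    ring
  rw [factor_norm, Zsqrtd.re_smul, Zsqrtd.norm_mul, zsqrtd_norm_pow, mul_comm]

/-- If `x₁ = y₁ = 1`, `x₂ = 5`, `y₂ = 3` and `xₙ = 4xₙ₋₁ − xₙ₋₂`, `yₙ = 4yₙ₋₁ − yₙ₋₂`
for `n ≥ 3`, then `xₙ₋₁xₙ₋₂ − 3yₙ₋₁yₙ₋₂ = −4` for all `n ≥ 3`. -/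
theorem x_mul_x_sub_three_y_mul_y_eq_neg_four (x y : ℕ → ℤ)
    (hx1 : x 1 = 1) (hy1 : y 1 = 1) (hx2 : x 2 = 5) (hy2 : y 2 = 3)
    (hx : ∀ n, 3 ≤ n → x n = 4 * x (n - 1) - x (n - 2))
    (hy : ∀ n, 3 ≤ n → y n = 4 * y (n - 1) - y (n - 2)) :
    ∀ n, 3 ≤ n → x (n - 1) * x (n - 2) - 3 * (y (n - 1) * y (n - 2)) = -4 := by
  intro n hn
  obtain ⟨k, rfl⟩ := Nat.exists_eq_add_of_le' hn
  let ε : ℤ√3 := ⟨2, 1⟩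
  let z : ℕ → ℤ√3 := fun m ↦ ⟨x (m + 1), y (m + 1)⟩
  have ε_sq : ε ^ 2 = 4 * ε - 1 := by decide
  have z_one : z 1 = ε * z 0 := by ext <;> simp [z, ε, hx1, hx2, hy1, hy2]
  have z_rec (m : ℕ) : z (m + 2) = 4 * z (m + 1) - 1 * z m := by
    ext
    · simpa [z] using hx (m + 3) (by lia)
    · simpa [z] using hy (m + 3) (by lia)
  have z_eq : ∀ m, z m = ε ^ m * z 0 := eq_pow_mul_of_linear_recurrence ε_sq z_one z_rec
  calc x (k + 2) * x (k + 1) - 3 * (y (k + 2) * y (k + 1))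
      = (z (k + 1) * star (z k)).re := (zsqrtd_re_mul_star (z (k + 1)) (z k)).symm
    _ = ε.re * (ε.norm ^ k * (z 0).norm) := by
      rw [z_eq (k + 1), z_eq k, zsqrtd_re_pow_succ_mul_star]
    _ = 2 * (1 ^ k * (-2)) := by simp [z, ε, Zsqrtd.norm_def, hx1, hy1]
    _ = -4 := by norm_num
end

section
/- Let p(x) = ∑ a_j x^j be a polynomial with real coefficients and let b be a nonzero real number. Then p has a root at bi (as a complex number) if and only if both p_even(x) = ∑ a_{2j} x^j and p_odd(x) = ∑ a_{2j+1} x^j have roots at −b². -/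
open Polynomial

/-- The even part `p_even(x) = ∑ a_{2j} x^j` of a real polynomial `p(x) = ∑ a_j x^j`. -/
noncomputable def evenPart (p : Polynomial ℝ) : Polynomial ℝ :=
  ∑ j ∈ Finset.range (p.natDegree + 1), C (p.coeff (2 * j)) * X ^ j

/-- The odd part `p_odd(x) = ∑ a_{2j+1} x^j` of a real polynomial `p(x) = ∑ a_j x^j`. -/
noncomputable def oddPart (p : Polynomial ℝ) : Polynomial ℝ :=
  ∑ j ∈ Finset.range (p.natDegree + 1), C (p.coeff (2 * j + 1)) * X ^ j

/-! The splitting `p(x) = p_even(x²) + x p_odd(x²)`, with `p_even = contract 2 p` and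
`p_odd = contract 2 p.divX`, holds in every algebra. If `x²` is a scalar `c`, then
`p(x) = p_even(c) + p_odd(c) x` is a linear combination of `1` and `x` with scalar coefficients,
which vanishes only trivially when `1` and `x` are linearly independent. Over `ℝ` this applies to
`x = bi` with `c = -b²`. -/

section Contract

variable {R A : Type*}

theorem expand_contract_two_add_X_mul_expand_contract_two_divX [CommSemiring R] (p : R[X]) :
    expand R 2 (contract 2 p) + X * expand R 2 (contract 2 p.divX) = p := by
  ext n
  rcases n with _ | n
  · simp [coeff_expand, coeff_contract]
  · rw [coeff_add, coeff_X_mul, coeff_expand two_pos, coeff_expand two_pos,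
      coeff_contract two_ne_zero, coeff_contract two_ne_zero, coeff_divX]
    rcases Nat.even_or_odd' n with ⟨k, rfl | rfl⟩
    · have h_odd : ¬ 2 ∣ 2 * k + 1 := by lia
      simp [h_odd, mul_comm k]
    · have h_even : 2 ∣ 2 * k + 1 + 1 := by lia
      have h_odd : ¬ 2 ∣ 2 * k + 1 := by lia
      simp [h_even, h_odd, Nat.div_mul_cancel h_even]

theorem aeval_eq_aeval_sq_contract_two [CommSemiring R] [Semiring A] [Algebra R A]
    (p : R[X]) (x : A) :
    aeval x p = aeval (x ^ 2) (contract 2 p) + x * aeval (x ^ 2) (contract 2 p.divX) := by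
  conv_lhs => rw [← expand_contract_two_add_X_mul_expand_contract_two_divX p]
  simp only [map_add, map_mul, aeval_X, expand_aeval]

theorem aeval_eq_smul_one_add_smul_of_sq_eq_algebraMap [CommSemiring R] [Semiring A] [Algebra R A]
    (p : R[X]) {x : A} {c : R} (hx : x ^ 2 = algebraMap R A c) :
    aeval x p = (contract 2 p).eval c • (1 : A) + (contract 2 p.divX).eval c • x := by
  rw [aeval_eq_aeval_sq_contract_two, hx, aeval_algebraMap_apply_eq_algebraMap_eval,
    aeval_algebraMap_apply_eq_algebraMap_eval, ← Algebra.commutes, ← Algebra.smul_def,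
    Algebra.algebraMap_eq_smul_one]

theorem root_bI_iff_evenPart_oddPart_root_general [CommRing R] [Ring A] [Algebra R A]
    (p : R[X]) {x : A} {c : R} (hx : x ^ 2 = algebraMap R A c)
    (hli : LinearIndependent R ![1, x]) :
    aeval x p = 0 ↔ (contract 2 p).eval c = 0 ∧ (contract 2 p.divX).eval c = 0 := by
  rw [aeval_eq_smul_one_add_smul_of_sq_eq_algebraMap p hx]
  refine ⟨LinearIndependent.pair_iff.mp hli _ _, ?_⟩
  rintro ⟨h_even, h_odd⟩
  simp [h_even, h_odd]

end Contract

theorem evenPart_eq_contract_two (p : ℝ[X]) : evenPart p = contract 2 p := by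
  simp only [evenPart, contract, C_mul_X_pow_eq_monomial, mul_comm 2]

theorem oddPart_eq_contract_two_divX (p : ℝ[X]) : oddPart p = contract 2 p.divX := by
  ext n
  rw [coeff_contract two_ne_zero, coeff_divX, mul_comm n 2]
  simp only [oddPart, finsetSum_coeff, coeff_C_mul_X_pow, Finset.sum_ite_eq, Finset.mem_range,
    ite_eq_left_iff, not_lt]
  exact fun hn ↦ (coeff_eq_zero_of_natDegree_lt (by lia)).symm

theorem ofReal_mul_I_sq (b : ℝ) : ((b : ℂ) * Complex.I) ^ 2 = algebraMap ℝ ℂ (-b ^ 2) := by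
  simp [mul_pow]

theorem linearIndependent_one_ofReal_mul_I {b : ℝ} (hb : b ≠ 0) :
    LinearIndependent ℝ ![1, (b : ℂ) * Complex.I] := by
  simp [LinearIndependent.pair_iff, Complex.ext_iff, hb]

/-- A real polynomial `p` has a root at `bi` (`b` a nonzero real) if and only if both its
even and odd parts have roots at `−b²`. -/
theorem root_bI_iff_evenPart_oddPart_root (p : Polynomial ℝ) (b : ℝ) (hb : b ≠ 0) :
    aeval ((b : ℂ) * Complex.I) p = 0 ↔
      (evenPart p).eval (-b ^ 2) = 0 ∧ (oddPart p).eval (-b ^ 2) = 0 := by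
  rw [evenPart_eq_contract_two, oddPart_eq_contract_two_divX]
  exact root_bI_iff_evenPart_oddPart_root_general p (ofReal_mul_I_sq b)
    (linearIndependent_one_ofReal_mul_I hb)
end
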